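/- arXiv:1806.03232 — 4 statements merged into one kernel-verified Lean document; each statement's English description precedes it below -/
import Mathlib

section
/- Let I and J be finite nonempty sets, c : I×J → ℝ, r : I×J → ℝ with r_{ij} > 0 for all i,j, T > 0, and let σ_in : I → ℝ and σ_out : J → ℝ be probability vectors. Suppose u : I → ℝ and v : J → ℝ are positive vectors such that γ*_{ij} = u_i · v_j · r_{ij} · exp(−c_{ij}/T) satisfies ∑_j γ*_{ij} = (σ_in)_i for every i and ∑_i γ*_{ij} = (σ_out)_j for every j. Define λ_in,i = −T·log u_i and λ_out,j = −T·log v_j. Then the value of the free energy at γ* is F(γ*) = ∑_{i,j} γ*_{ij}·c_{ij} + T·∑_{i,j} γ*_{ij}·log(γ*_{ij}/r_{ij}) = −(∑_i λ_in,i·(σ_in)_i + ∑_j λ_out,j·(σ_out)_j). -/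
/-!
At a scaled Gibbs matrix `γ i j = u i * v j * r i j * exp (-c i j / T)` the gradient
`c i j + T * log (γ i j / r i j)` (up to the constant `T`) separates as `-(lamIn i + lamOut j)`, and
summing a separable function against `γ` only sees the margins of `γ`.
-/

section FreeEnergy

variable {I J : Type*} [Fintype I] [Fintype J]

/-- The free energy `F(γ)` of a matrix `γ` at temperature `T`, with cost matrix `c` and reference
matrix `r`: expected cost plus `T` times the relative entropy of `γ` with respect to `r`. The
convention `0 * log 0 = 0` is automatic, since `Real.log` is real-valued everywhere. -/
noncomputable def freeEnergy (T : ℝ) (c r γ : I → J → ℝ) : ℝ :=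
  ∑ i, ∑ j, γ i j * c i j + T * ∑ i, ∑ j, γ i j * Real.log (γ i j / r i j)

theorem freeEnergy_eq_sum_mul_add (T : ℝ) (c r γ : I → J → ℝ) :
    freeEnergy T c r γ = ∑ i, ∑ j, γ i j * (c i j + T * Real.log (γ i j / r i j)) := by
  simp only [freeEnergy, mul_add, Finset.mul_sum, Finset.sum_add_distrib, mul_left_comm T]

theorem sum_sum_mul_add_eq_of_margins {R : Type*} [NonUnitalNonAssocSemiring R]
    {γ : I → J → R} {p : I → R} {q : J → R}
    (hrow : ∀ i, ∑ j, γ i j = p i) (hcol : ∀ j, ∑ i, γ i j = q j) (a : I → R) (b : J → R) :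
    ∑ i, ∑ j, γ i j * (a i + b j) = ∑ i, p i * a i + ∑ j, q j * b j := by
  simp only [mul_add, Finset.sum_add_distrib]
  congr 1
  · simp only [← Finset.sum_mul, hrow]
  · rw [Finset.sum_comm]
    simp only [← Finset.sum_mul, hcol]

theorem freeEnergy_eq_of_add_mul_log_eq {T : ℝ} {c r γ : I → J → ℝ}
    {p lamIn : I → ℝ} {q lamOut : J → ℝ}
    (hrow : ∀ i, ∑ j, γ i j = p i) (hcol : ∀ j, ∑ i, γ i j = q j)
    (hγ : ∀ i j, c i j + T * Real.log (γ i j / r i j) = -(lamIn i + lamOut j)) :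
    freeEnergy T c r γ = -(∑ i, lamIn i * p i + ∑ j, lamOut j * q j) := by
  calc freeEnergy T c r γ = -∑ i, ∑ j, γ i j * (lamIn i + lamOut j) := by
        simp only [freeEnergy_eq_sum_mul_add, hγ, mul_neg, Finset.sum_neg_distrib]
    _ = -(∑ i, p i * lamIn i + ∑ j, q j * lamOut j) := by
        rw [sum_sum_mul_add_eq_of_margins hrow hcol]
    _ = -(∑ i, lamIn i * p i + ∑ j, lamOut j * q j) := by
        simp only [mul_comm]

theorem add_mul_log_mul_exp_neg_div_div {T r u v : ℝ} (hT : T ≠ 0) (hr : r ≠ 0)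
    (hu : u ≠ 0) (hv : v ≠ 0) (c : ℝ) :
    c + T * Real.log (u * v * r * Real.exp (-c / T) / r) =
      T * Real.log u + T * Real.log v := by
  have hratio : u * v * r * Real.exp (-c / T) / r = u * v * Real.exp (-c / T) := by
    field_simp
  have hlog : Real.log (u * v * Real.exp (-c / T)) = Real.log u + Real.log v + -c / T := by
    rw [Real.log_mul (mul_ne_zero hu hv) (Real.exp_ne_zero _), Real.log_mul hu hv, Real.log_exp]
  rw [hratio, hlog, mul_add, mul_add, mul_div_cancel₀ _ hT]
  ring

theorem stmt5_general {c r : I → J → ℝ} (hr : ∀ i j, r i j ≠ 0) {T : ℝ} (hT : T ≠ 0)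
    {p : I → ℝ} {q : J → ℝ} {u : I → ℝ} {v : J → ℝ} (hu : ∀ i, 0 < u i) (hv : ∀ j, 0 < v j)
    {γ : I → J → ℝ} (hγ : ∀ i j, γ i j = u i * v j * r i j * Real.exp (-(c i j) / T))
    (hrow : ∀ i, ∑ j, γ i j = p i) (hcol : ∀ j, ∑ i, γ i j = q j)
    {lamIn : I → ℝ} (hlamIn : ∀ i, lamIn i = -T * Real.log (u i))
    {lamOut : J → ℝ} (hlamOut : ∀ j, lamOut j = -T * Real.log (v j)) :
    freeEnergy T c r γ = -(∑ i, lamIn i * p i + ∑ j, lamOut j * q j) := by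
  refine freeEnergy_eq_of_add_mul_log_eq hrow hcol fun i j => ?_
  rw [hγ, add_mul_log_mul_exp_neg_div_div hT (hr i j) (hu i).ne' (hv j).ne', hlamIn, hlamOut]
  ring

end FreeEnergy

/-- The optimal free energy equals minus the inner products of the Lagrange multiplier vectors
`λ_in = -T log u` and `λ_out = -T log v` with the prescribed margins. -/
theorem stmt5 (I J : Type*) [Fintype I] [Fintype J] [Nonempty I] [Nonempty J]
    (c r : I → J → ℝ) (hr : ∀ i j, 0 < r i j) (T : ℝ) (hT : 0 < T)
    (σin : I → ℝ) (σout : J → ℝ)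
    (hσin0 : ∀ i, 0 ≤ σin i) (hσin1 : ∑ i, σin i = 1)
    (hσout0 : ∀ j, 0 ≤ σout j) (hσout1 : ∑ j, σout j = 1)
    (u : I → ℝ) (v : J → ℝ) (hu : ∀ i, 0 < u i) (hv : ∀ j, 0 < v j)
    (γstar : I → J → ℝ)
    (hγstar : ∀ i j, γstar i j = u i * v j * r i j * Real.exp (-(c i j) / T))
    (hrow : ∀ i, ∑ j, γstar i j = σin i)
    (hcol : ∀ j, ∑ i, γstar i j = σout j)
    (lamIn : I → ℝ) (hlamIn : ∀ i, lamIn i = -T * Real.log (u i))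
    (lamOut : J → ℝ) (hlamOut : ∀ j, lamOut j = -T * Real.log (v j)) :
    ∑ i, ∑ j, γstar i j * c i j
        + T * ∑ i, ∑ j, γstar i j * Real.log (γstar i j / r i j)
      = -(∑ i, lamIn i * σin i + ∑ j, lamOut j * σout j) :=
  stmt5_general (fun i j => (hr i j).ne') hT.ne' hu hv hγstar hrow hcol hlamIn hlamOut
end

section
/- Let Ŵ be an n×n real matrix with nonnegative entries such that I − Ŵ is invertible, and let Ẑ = (I − Ŵ)^{-1}. Let σ_in, α, n̄_ref ∈ ℝ^n be nonnegative vectors and let μ_in, μ_out ∈ ℝ^n be positive vectors satisfying the fixed-point equations μ_in = 1 ÷ (Ẑ(μ_out ∘ α)) and μ_out = n̄_ref ÷ (Ẑ^⊤(μ_in ∘ σ_in)), where ∘ and ÷ denote elementwise product and division and 1 is the all-ones vector (in particular the denominators are entrywise nonzero). Define Γ = Diag(μ_in ∘ σ_in) · Ẑ · Diag(μ_out ∘ α). Then for every i, ∑_j Γ_{ij} = (σ_in)_i, and for every j, ∑_i Γ_{ij} = α_j · (n̄_ref)_j. -/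
open Matrix

section DiagonalScaling

variable {m n : Type*} [Fintype m] [Fintype n] [DecidableEq m] [DecidableEq n]

theorem sum_row_diagonal_mul_mul_diagonal {R : Type*} [NonUnitalSemiring R]
    (a : m → R) (Z : Matrix m n R) (b : n → R) (i : m) :
    ∑ j, (diagonal a * Z * diagonal b) i j = a i * (Z *ᵥ b) i := by
  simp only [mul_diagonal, diagonal_mul, mulVec, dotProduct, Finset.mul_sum, mul_assoc]

theorem transpose_diagonal_mul_mul_diagonal {R : Type*} [NonUnitalCommSemiring R]
    (a : m → R) (Z : Matrix m n R) (b : n → R) :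
    (diagonal a * Z * diagonal b)ᵀ = diagonal b * Zᵀ * diagonal a := by
  simp only [transpose_mul, diagonal_transpose, Matrix.mul_assoc]

variable {K : Type*} [Semifield K]

theorem sum_row_diagonal_mul_mul_diagonal_of_eq_div (Z : Matrix m n K) (s : m → K) (b : n → K)
    {u : m → K} {i : m} {r : K} (hd : (Z *ᵥ b) i ≠ 0) (hu : u i = r / (Z *ᵥ b) i) :
    ∑ j, (diagonal (u * s) * Z * diagonal b) i j = s i * r := calc
  _ = u i * s i * (Z *ᵥ b) i := sum_row_diagonal_mul_mul_diagonal (u * s) Z b i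
  _ = s i * (u i * (Z *ᵥ b) i) := by ring
  _ = s i * r := by rw [(eq_div_iff hd).mp hu]

theorem stmt7_general (Z : Matrix m n K) (σin : m → K) (α nref : n → K)
    (μin : m → K) (μout : n → K)
    (hd1 : ∀ i, (Z *ᵥ (μout * α)) i ≠ 0)
    (hd2 : ∀ j, (Zᵀ *ᵥ (μin * σin)) j ≠ 0)
    (hfix1 : ∀ i, μin i = 1 / (Z *ᵥ (μout * α)) i)
    (hfix2 : ∀ j, μout j = nref j / (Zᵀ *ᵥ (μin * σin)) j) :
    let Γ := diagonal (μin * σin) * Z * diagonal (μout * α)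
    (∀ i, ∑ j, Γ i j = σin i) ∧ (∀ j, ∑ i, Γ i j = α j * nref j) := by
  intro Γ
  have hΓ : Γᵀ = diagonal (μout * α) * Zᵀ * diagonal (μin * σin) :=
    transpose_diagonal_mul_mul_diagonal _ _ _
  refine ⟨fun i ↦ ?_, fun j ↦ ?_⟩
  · simpa only [mul_one] using
      sum_row_diagonal_mul_mul_diagonal_of_eq_div Z σin (μout * α) (hd1 i) (hfix1 i)
  · calc ∑ i, Γ i j = ∑ i, Γᵀ j i := rfl
      _ = α j * nref j := by
        rw [hΓ]
        exact sum_row_diagonal_mul_mul_diagonal_of_eq_div Zᵀ α (μin * σin) (hd2 j) (hfix2 j)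

end DiagonalScaling

/-- When the Lagrange scaling vectors `μ_in, μ_out` satisfy the balancing fixed-point equations,
the coupling matrix `Γ = Diag(μ_in ∘ σ_in) Ẑ Diag(μ_out ∘ α)` has row margins `σ_in` and
column margins `σ_out = α ∘ n̄_ref`. -/
theorem stmt7 (n : ℕ) (What : Matrix (Fin n) (Fin n) ℝ)
    (hW : ∀ i j, 0 ≤ What i j) (hinv : IsUnit (1 - What))
    (Zhat : Matrix (Fin n) (Fin n) ℝ) (hZ : Zhat = (1 - What)⁻¹)
    (σin α nref : Fin n → ℝ)
    (hσ : ∀ i, 0 ≤ σin i) (hα : ∀ i, 0 ≤ α i) (hnref : ∀ i, 0 ≤ nref i)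
    (μin μout : Fin n → ℝ) (hμin : ∀ i, 0 < μin i) (hμout : ∀ i, 0 < μout i)
    (hd1 : ∀ i, (Zhat *ᵥ (μout * α)) i ≠ 0)
    (hd2 : ∀ i, (Zhatᵀ *ᵥ (μin * σin)) i ≠ 0)
    (hfix1 : ∀ i, μin i = 1 / (Zhat *ᵥ (μout * α)) i)
    (hfix2 : ∀ i, μout i = nref i / (Zhatᵀ *ᵥ (μin * σin)) i) :
    let Γ := Matrix.diagonal (μin * σin) * Zhat * Matrix.diagonal (μout * α)
    (∀ i, ∑ j, Γ i j = σin i) ∧ (∀ j, ∑ i, Γ i j = α j * nref j) :=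
  stmt7_general Zhat σin α nref μin μout hd1 hd2 hfix1 hfix2
end

section
/- Let Ŵ be an n×n real matrix with nonnegative entries such that I − Ŵ is invertible, and let Ẑ = (I − Ŵ)^{-1}. Let σ_in, α, n̄_ref ∈ ℝ^n be nonnegative vectors and let μ_in, μ_out ∈ ℝ^n be positive vectors satisfying μ_in = 1 ÷ (Ẑ(μ_out ∘ α)) and μ_out = n̄_ref ÷ (Ẑ^⊤(μ_in ∘ σ_in)) (elementwise, with entrywise nonzero denominators). Define n̄_{ij} = (n̄_ref)_i · Ŵ_{ij} / ((μ_out)_i · (μ_in)_j) for all i, j, and n̄_i = (n̄_ref)_i / ((μ_in)_i · (μ_out)_i). Then for every i: ∑_j n̄_{ij} = n̄_i − α_i·(n̄_ref)_i and ∑_j n̄_{ji} = n̄_i − (σ_in)_i. -/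
open Matrix

/-! Write `a = 1 ÷ μ_in` and `b = n̄_ref ÷ μ_out`, so that `n̄_{ij} = b_i W_{ij} a_j` and
`n̄_i = a_i b_i`. The constraints say `a = Z (μ_out ∘ α)` and `b = Zᵀ (μ_in ∘ σ_in)`, and
`W Z = Z - 1` turns `W a` into `a - μ_out ∘ α`, which gives the row sums of `n̄`. The column sums
are the row sums for `Wᵀ`, with the roles of `a` and `b` exchanged. -/

section DiagonalScaling

variable {ι R : Type*} [Fintype ι] [DecidableEq ι]

theorem sum_row_diagonal_mul_mul_diagonal_s8 [Semiring R] (u v : ι → R) (W : Matrix ι ι R) (i : ι) :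
    ∑ j, (diagonal u * W * diagonal v) i j = u i * (W *ᵥ v) i := by
  simp only [mul_diagonal, diagonal_mul, mulVec, dotProduct, Finset.mul_sum, mul_assoc]

variable [CommRing R] {W : Matrix ι ι R}

theorem mul_inv_one_sub (hW : IsUnit (1 - W)) : W * (1 - W)⁻¹ = (1 - W)⁻¹ - 1 := by
  have hmul : (1 - W) * (1 - W)⁻¹ = 1 := mul_nonsing_inv _ ((isUnit_iff_isUnit_det _).1 hW)
  rw [sub_mul, one_mul] at hmul
  exact eq_sub_of_add_eq' (sub_eq_iff_eq_add.1 hmul).symm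

theorem mulVec_inv_one_sub_mulVec (hW : IsUnit (1 - W)) (f : ι → R) :
    W *ᵥ ((1 - W)⁻¹ *ᵥ f) = (1 - W)⁻¹ *ᵥ f - f := by
  rw [mulVec_mulVec, mul_inv_one_sub hW, sub_mulVec, one_mulVec]

theorem sum_row_diagonal_mul_mul_diagonal_of_inv_one_sub_mulVec_eq (hW : IsUnit (1 - W))
    {a f : ι → R} (ha : (1 - W)⁻¹ *ᵥ f = a) (b : ι → R) (i : ι) :
    ∑ j, (diagonal b * W * diagonal a) i j = b i * (a i - f i) := by
  rw [sum_row_diagonal_mul_mul_diagonal_s8, ← ha, mulVec_inv_one_sub_mulVec hW, Pi.sub_apply]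

theorem sum_col_diagonal_mul_mul_diagonal_of_inv_one_sub_transpose_mulVec_eq
    (hW : IsUnit (1 - W)) {b g : ι → R} (hb : (1 - W)⁻¹ᵀ *ᵥ g = b) (a : ι → R) (j : ι) :
    ∑ i, (diagonal b * W * diagonal a) i j = a j * (b j - g j) := by
  have htranspose : (1 - W)ᵀ = 1 - Wᵀ := by rw [transpose_sub, transpose_one]
  have hWt : IsUnit (1 - Wᵀ) := htranspose ▸ (isUnit_transpose _).2 hW
  rw [transpose_nonsing_inv, htranspose] at hb
  calc ∑ i, (diagonal b * W * diagonal a) i j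
      = ∑ i, (diagonal a * Wᵀ * diagonal b) j i := by
        simp only [mul_diagonal, diagonal_mul, transpose_apply, mul_comm, mul_left_comm]
    _ = a j * (b j - g j) :=
        sum_row_diagonal_mul_mul_diagonal_of_inv_one_sub_mulVec_eq hWt hb a j

end DiagonalScaling

section BagOfPaths

variable {ι K : Type*} [Field K]

/-- The matrix `n̄_{ij}` of expected numbers of passages through the edges `(i, j)` in the
margin-constrained bag-of-paths model with weights `W`, reference visits `nref` and margin
multipliers `μin`, `μout`. -/
def expectedPassages (W : Matrix ι ι K) (nref μin μout : ι → K) : Matrix ι ι K :=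
  of fun i j ↦ nref i * W i j / (μout i * μin j)

/-- The vector `n̄_i` of expected numbers of visits to the nodes `i` in the margin-constrained
bag-of-paths model with reference visits `nref` and margin multipliers `μin`, `μout`. -/
def expectedVisits (nref μin μout : ι → K) (i : ι) : K :=
  nref i / (μin i * μout i)

variable [Fintype ι] [DecidableEq ι] {W : Matrix ι ι K} {σin α nref μin μout : ι → K}

theorem expectedPassages_eq_diagonal_mul_mul_diagonal (W : Matrix ι ι K) (nref μin μout : ι → K) :
    expectedPassages W nref μin μout = diagonal (nref / μout) * W * diagonal (1 / μin) := by
  ext i j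
  simp only [expectedPassages, of_apply, mul_diagonal, diagonal_mul, Pi.div_apply, Pi.one_apply]
  ring

theorem sum_row_expectedPassages (hW : IsUnit (1 - W)) (hμout : ∀ i, μout i ≠ 0)
    (hμin_eq : ∀ i, μin i = 1 / ((1 - W)⁻¹ *ᵥ (μout * α)) i) (i : ι) :
    ∑ j, expectedPassages W nref μin μout i j =
      expectedVisits nref μin μout i - α i * nref i := by
  have hinv : (1 - W)⁻¹ *ᵥ (μout * α) = 1 / μin := by
    ext k
    rw [Pi.div_apply, Pi.one_apply, hμin_eq, one_div_one_div]
  rw [expectedPassages_eq_diagonal_mul_mul_diagonal,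
    sum_row_diagonal_mul_mul_diagonal_of_inv_one_sub_mulVec_eq hW hinv]
  simp only [expectedVisits, Pi.div_apply, Pi.one_apply, Pi.mul_apply]
  field [hμout i]

theorem sum_col_expectedPassages (hW : IsUnit (1 - W)) (hμin : ∀ i, μin i ≠ 0)
    (hμout : ∀ i, μout i ≠ 0)
    (hμout_eq : ∀ i, μout i = nref i / ((1 - W)⁻¹ᵀ *ᵥ (μin * σin)) i) (i : ι) :
    ∑ j, expectedPassages W nref μin μout j i = expectedVisits nref μin μout i - σin i := by
  have hinv : (1 - W)⁻¹ᵀ *ᵥ (μin * σin) = nref / μout := by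
    ext k
    have hnref : nref k ≠ 0 := (div_ne_zero_iff.1 (hμout_eq k ▸ hμout k)).1
    rw [Pi.div_apply, hμout_eq, div_div_cancel₀ hnref]
  rw [expectedPassages_eq_diagonal_mul_mul_diagonal,
    sum_col_diagonal_mul_mul_diagonal_of_inv_one_sub_transpose_mulVec_eq hW hinv]
  simp only [expectedVisits, Pi.div_apply, Pi.one_apply, Pi.mul_apply]
  field [hμin i]

theorem stmt8_general (hW : IsUnit (1 - W)) (hμin : ∀ i, μin i ≠ 0) (hμout : ∀ i, μout i ≠ 0)
    (hμin_eq : ∀ i, μin i = 1 / ((1 - W)⁻¹ *ᵥ (μout * α)) i)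
    (hμout_eq : ∀ i, μout i = nref i / ((1 - W)⁻¹ᵀ *ᵥ (μin * σin)) i) (i : ι) :
    (∑ j, expectedPassages W nref μin μout i j =
      expectedVisits nref μin μout i - α i * nref i) ∧
    (∑ j, expectedPassages W nref μin μout j i = expectedVisits nref μin μout i - σin i) :=
  ⟨sum_row_expectedPassages hW hμout hμin_eq i, sum_col_expectedPassages hW hμin hμout hμout_eq i⟩

end BagOfPaths

/-- Expected numbers of passages through edges and of visits to nodes in the
margin-constrained bag-of-paths model. -/
theorem stmt8 (n : ℕ) (What : Matrix (Fin n) (Fin n) ℝ)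
    (hW : ∀ i j, 0 ≤ What i j) (hinv : IsUnit (1 - What))
    (Zhat : Matrix (Fin n) (Fin n) ℝ) (hZ : Zhat = (1 - What)⁻¹)
    (σin α nref : Fin n → ℝ)
    (hσ : ∀ i, 0 ≤ σin i) (hα : ∀ i, 0 ≤ α i) (hnref : ∀ i, 0 ≤ nref i)
    (μin μout : Fin n → ℝ) (hμin : ∀ i, 0 < μin i) (hμout : ∀ i, 0 < μout i)
    (hd1 : ∀ i, (Zhat *ᵥ (μout * α)) i ≠ 0)
    (hd2 : ∀ i, (Zhatᵀ *ᵥ (μin * σin)) i ≠ 0)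
    (hfix1 : ∀ i, μin i = 1 / (Zhat *ᵥ (μout * α)) i)
    (hfix2 : ∀ i, μout i = nref i / (Zhatᵀ *ᵥ (μin * σin)) i)
    (N : Matrix (Fin n) (Fin n) ℝ)
    (hN : ∀ i j, N i j = nref i * What i j / (μout i * μin j))
    (nbar : Fin n → ℝ) (hnbar : ∀ i, nbar i = nref i / (μin i * μout i)) :
    ∀ i, (∑ j, N i j = nbar i - α i * nref i) ∧ (∑ j, N j i = nbar i - σin i) := by
  simp only [hN, hnbar]
  subst hZ
  exact stmt8_general hinv (fun i ↦ (hμin i).ne') (fun i ↦ (hμout i).ne') hfix1 hfix2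
end

section
/- Let n ≥ 2, let W be an n×n real matrix with nonnegative entries whose Neumann series converges with sum Z = (I − W)^{-1} (so Z_{jj} ≥ 1 > 0 for all j), and let a, b ∈ ℝ^n be positive vectors. Define γ_{ij} = a_i · b_j · Z_{ij}/Z_{jj} and assume γ_{ij} > 0 for all i, j and ∑_{i,j} γ_{ij} = 1. Define Δ_{ij} = −(log γ_{ij} + log γ_{ji})/2 for i ≠ j and Δ_{ii} = 0. Then Δ is a distance metric on {1,…,n}: Δ_{ij} ≥ 0 for all i, j, with Δ_{ij} = 0 if and only if i = j; Δ_{ij} = Δ_{ji} for all i, j; and Δ_{ij} ≤ Δ_{ik} + Δ_{kj} for all i, j, k. -/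
open Matrix

/-!
The entries of `Z = ∑ W ^ t` satisfy `Z i k * Z k j ≤ Z i j * Z k k`: as a function of `i`, the
difference `u` of the two sides vanishes at `k` and satisfies `u ≤ W u` elsewhere, so `u⁺ ≤ W u⁺`
everywhere; iterating, `u⁺ ≤ W ^ t u⁺ → 0`. Dividing by diagonal entries, the hitting matrix is
supermultiplicative. Scaling rows and columns leaves a factor `γ k k`, which is at most `1` because
`γ` has total mass `1`; taking `-log` then turns `γ i k * γ k j ≤ γ i j` into the triangle
inequality.
-/

section MaximumPrinciple

open Filter Topology

variable {ι R : Type*} [Fintype ι] [DecidableEq ι] [CommRing R] [LinearOrder R] [IsOrderedRing R]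
  [TopologicalSpace R] [IsTopologicalRing R] [OrderClosedTopology R]
  {W Z : Matrix ι ι R} {u : ι → R}

theorem nonpos_of_le_mulVec (hW : ∀ i j, 0 ≤ W i j) (hlim : Tendsto (W ^ ·) atTop (𝓝 0))
    (hu : u ≤ W *ᵥ u) : u ≤ 0 := by
  have le_pow_mulVec (t : ℕ) : u ≤ W ^ t *ᵥ u := by
    induction t with
    | zero => simp
    | succ t ih =>
      calc u ≤ W *ᵥ u := hu
        _ ≤ W *ᵥ (W ^ t *ᵥ u) := fun i ↦ dotProduct_le_dotProduct_of_nonneg_left ih (hW i)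
        _ = W ^ (t + 1) *ᵥ u := by rw [mulVec_mulVec, pow_succ']
  have pow_mulVec_tendsto : Tendsto (W ^ · *ᵥ u) atTop (𝓝 0) := by
    have hcont : Continuous fun M : Matrix ι ι R ↦ M *ᵥ u := by fun_prop
    simpa only [zero_mulVec, Function.comp_def] using (hcont.tendsto 0).comp hlim
  exact fun i ↦ ge_of_tendsto' (tendsto_pi_nhds.mp pow_mulVec_tendsto i) (le_pow_mulVec · i)

theorem nonpos_of_nonpos_or_le_mulVec (hW : ∀ i j, 0 ≤ W i j)
    (hlim : Tendsto (W ^ ·) atTop (𝓝 0)) (hu : ∀ i, u i ≤ 0 ∨ u i ≤ (W *ᵥ u) i) : u ≤ 0 := by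
  refine (le_posPart u).trans <| nonpos_of_le_mulVec hW hlim fun i ↦ ?_
  have mulVec_nonneg : 0 ≤ (W *ᵥ u⁺) i := dotProduct_nonneg_of_nonneg (hW i) (posPart_nonneg u)
  have mulVec_le : (W *ᵥ u) i ≤ (W *ᵥ u⁺) i :=
    dotProduct_le_dotProduct_of_nonneg_left (le_posPart u) (hW i)
  exact sup_le ((hu i).elim (·.trans mulVec_nonneg) (·.trans mulVec_le)) mulVec_nonneg

theorem nonneg_of_eq_one_add_mul (hW : ∀ i j, 0 ≤ W i j) (hlim : Tendsto (W ^ ·) atTop (𝓝 0))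
    (hZ : Z = 1 + W * Z) (i j : ι) : 0 ≤ Z i j := by
  refine neg_nonpos.mp <| nonpos_of_le_mulVec (u := -Z.col j) hW hlim (fun l ↦ ?_) i
  have hrec : Z l j = (1 : Matrix ι ι R) l j + (W *ᵥ Z.col j) l := congr_fun₂ hZ l j
  have hone : 0 ≤ (1 : Matrix ι ι R) l j := by rw [one_apply]; split_ifs <;> simp
  rw [mulVec_neg, Pi.neg_apply, Pi.neg_apply, col_apply, hrec]
  exact neg_le_neg (le_add_of_nonneg_left hone)

theorem one_le_diag_of_eq_one_add_mul (hW : ∀ i j, 0 ≤ W i j)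
    (hlim : Tendsto (W ^ ·) atTop (𝓝 0)) (hZ : Z = 1 + W * Z) (i : ι) : 1 ≤ Z i i := by
  have hrec : Z i i = 1 + ∑ l, W i l * Z l i := by
    simpa only [Matrix.add_apply, one_apply_eq, mul_apply] using congr_fun₂ hZ i i
  rw [hrec, le_add_iff_nonneg_right]
  exact Finset.sum_nonneg fun l _ ↦
    mul_nonneg (hW i l) (nonneg_of_eq_one_add_mul hW hlim hZ l i)

theorem mul_le_mul_diag_of_eq_one_add_mul (hW : ∀ i j, 0 ≤ W i j)
    (hlim : Tendsto (W ^ ·) atTop (𝓝 0)) (hZ : Z = 1 + W * Z) (i j k : ι) :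
    Z i k * Z k j ≤ Z i j * Z k k := by
  let u : ι → R := Z k j • Z.col k - Z k k • Z.col j
  suffices u ≤ 0 by
    have hui : Z k j * Z i k ≤ Z k k * Z i j := sub_nonpos.mp (this i)
    rwa [mul_comm (Z i k), mul_comm (Z i j)]
  refine nonpos_of_nonpos_or_le_mulVec hW hlim fun l ↦ ?_
  obtain rfl | hlk := eq_or_ne l k
  · exact .inl (by simp [u, mul_comm])
  right
  have col_rec (m : ι) : Z l m = (1 : Matrix ι ι R) l m + (W *ᵥ Z.col m) l := congr_fun₂ hZ l m
  have hk : Z l k = (W *ᵥ Z.col k) l := by rw [col_rec k, one_apply_ne hlk, zero_add]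
  have hj : (W *ᵥ Z.col j) l ≤ Z l j := by
    rw [col_rec j, le_add_iff_nonneg_left, one_apply]
    split_ifs <;> simp
  calc u l = Z k j * (W *ᵥ Z.col k) l - Z k k * Z l j := by simp [u, hk]
    _ ≤ Z k j * (W *ᵥ Z.col k) l - Z k k * (W *ᵥ Z.col j) l := by
      have := nonneg_of_eq_one_add_mul hW hlim hZ k k
      gcongr
    _ = (W *ᵥ u) l := by simp [u, mulVec_sub, mulVec_smul]

end MaximumPrinciple

theorem tsum_pow_eq_one_add_mul_tsum_pow {R : Type*} [Ring R] [TopologicalSpace R]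
    [IsTopologicalRing R] [T2Space R] {x : R} (hx : Summable (x ^ · : ℕ → R)) :
    ∑' t : ℕ, x ^ t = 1 + x * ∑' t : ℕ, x ^ t := by
  have hmul := hx.one_sub_mul_tsum_pow
  rwa [sub_mul, one_mul, sub_eq_iff_eq_add] at hmul

section Hitting

variable {ι R : Type*} [Field R]

/-- The hitting fundamental matrix `Z_h` of a fundamental matrix `Z`. Its entries are `0` in the
columns where the diagonal entry of `Z` vanishes. -/
def hittingMatrix (Z : Matrix ι ι R) : Matrix ι ι R :=
  of fun i j ↦ Z i j / Z j j

/-- The coupling matrix of the margin-constrained bag-of-hitting-paths model, with the Lagrange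
scaling factors `a` for the sources and `b` for the targets. -/
def hittingCoupling (a b : ι → R) (Z : Matrix ι ι R) : Matrix ι ι R :=
  of fun i j ↦ a i * b j * hittingMatrix Z i j

variable [LinearOrder R] [IsStrictOrderedRing R] {Z : Matrix ι ι R}

theorem hittingMatrix_mul_le {i j k : ι} (hj : 0 < Z j j) (hk : 0 < Z k k)
    (hZ : Z i k * Z k j ≤ Z i j * Z k k) :
    hittingMatrix Z i k * hittingMatrix Z k j ≤ hittingMatrix Z i j := by
  simp only [hittingMatrix, of_apply]
  rw [div_mul_div_comm, div_le_div_iff₀ (mul_pos hk hj) hj]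
  calc Z i k * Z k j * Z j j ≤ Z i j * Z k k * Z j j := by gcongr
    _ = Z i j * (Z k k * Z j j) := mul_assoc _ _ _

theorem hittingCoupling_mul_le {a b : ι → R} (ha : ∀ i, 0 ≤ a i) (hb : ∀ i, 0 ≤ b i) {i j k : ι}
    (hj : 0 < Z j j) (hk : 0 < Z k k) (hZ : Z i k * Z k j ≤ Z i j * Z k k) :
    hittingCoupling a b Z i k * hittingCoupling a b Z k j ≤
      hittingCoupling a b Z i j * hittingCoupling a b Z k k := by
  have hscale : 0 ≤ a i * b k * (a k * b j) :=
    mul_nonneg (mul_nonneg (ha i) (hb k)) (mul_nonneg (ha k) (hb j))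
  have hitting_self : hittingMatrix Z k k = 1 := div_self hk.ne'
  calc hittingCoupling a b Z i k * hittingCoupling a b Z k j
      = a i * b k * (a k * b j) * (hittingMatrix Z i k * hittingMatrix Z k j) :=
        mul_mul_mul_comm _ _ _ _
    _ ≤ a i * b k * (a k * b j) * hittingMatrix Z i j :=
        mul_le_mul_of_nonneg_left (hittingMatrix_mul_le hj hk hZ) hscale
    _ = hittingCoupling a b Z i j * hittingCoupling a b Z k k := by
        simp only [hittingCoupling, of_apply, hitting_self]
        ring

end Hitting

section TotalMass

variable {ι κ R : Type*} [Fintype ι] [Fintype κ] [AddCommMonoid R] [PartialOrder R]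
  {f : ι → κ → R}

theorem apply_le_sum_sum [IsOrderedAddMonoid R] (hf : ∀ i j, 0 ≤ f i j) (i : ι) (j : κ) :
    f i j ≤ ∑ i, ∑ j, f i j := by
  rw [← Fintype.sum_prod_type']
  exact Finset.single_le_sum (f := fun p : ι × κ ↦ f p.1 p.2) (fun p _ ↦ hf p.1 p.2)
    (Finset.mem_univ (i, j))

theorem apply_lt_sum_sum [IsOrderedCancelAddMonoid R] (hf : ∀ i j, 0 ≤ f i j) {i i' : ι}
    {j j' : κ} (hne : (i', j') ≠ (i, j)) (hpos : 0 < f i' j') : f i j < ∑ i, ∑ j, f i j := by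
  rw [← Fintype.sum_prod_type']
  exact Finset.single_lt_sum (f := fun p : ι × κ ↦ f p.1 p.2) hne (Finset.mem_univ (i, j))
    (Finset.mem_univ (i', j')) hpos fun p _ _ ↦ hf p.1 p.2

end TotalMass

section Surprisal

open Real

variable {ι : Type*} [DecidableEq ι] {γ : Matrix ι ι ℝ}

/-- The surprisal distance `Δ` of a coupling matrix `γ`: the symmetrized `-log γ`, with the
diagonal set to `0` by convention. -/
noncomputable def surprisalDist (γ : Matrix ι ι ℝ) : Matrix ι ι ℝ :=
  of fun i j ↦ if i = j then 0 else -(log (γ i j) + log (γ j i)) / 2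

theorem surprisalDist_self (i : ι) : surprisalDist γ i i = 0 :=
  if_pos rfl

theorem surprisalDist_of_ne {i j : ι} (hij : i ≠ j) :
    surprisalDist γ i j = -(log (γ i j) + log (γ j i)) / 2 :=
  if_neg hij

theorem surprisalDist_comm (i j : ι) : surprisalDist γ i j = surprisalDist γ j i := by
  simp only [surprisalDist, of_apply, eq_comm, add_comm]

theorem surprisalDist_nonneg (hpos : ∀ i j, 0 < γ i j) (hle : ∀ i j, γ i j ≤ 1) (i j : ι) :
    0 ≤ surprisalDist γ i j := by
  obtain rfl | hij := eq_or_ne i j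
  · exact (surprisalDist_self i).ge
  rw [surprisalDist_of_ne hij]
  linarith [log_nonpos (hpos i j).le (hle i j), log_nonpos (hpos j i).le (hle j i)]

theorem surprisalDist_eq_zero_iff (hpos : ∀ i j, 0 < γ i j) (hlt : ∀ i j, i ≠ j → γ i j < 1)
    {i j : ι} : surprisalDist γ i j = 0 ↔ i = j := by
  refine ⟨fun hzero ↦ ?_, fun h ↦ h ▸ surprisalDist_self i⟩
  by_contra hij
  rw [surprisalDist_of_ne hij] at hzero
  linarith [log_neg (hpos i j) (hlt i j hij), log_neg (hpos j i) (hlt j i (Ne.symm hij))]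

theorem surprisalDist_triangle (hpos : ∀ i j, 0 < γ i j)
    (hmul : ∀ i j k, γ i k * γ k j ≤ γ i j) (i j k : ι) :
    surprisalDist γ i j ≤ surprisalDist γ i k + surprisalDist γ k j := by
  have log_add_log_le (i j k : ι) : log (γ i k) + log (γ k j) ≤ log (γ i j) := by
    rw [← log_mul (hpos i k).ne' (hpos k j).ne']
    exact log_le_log (mul_pos (hpos i k) (hpos k j)) (hmul i j k)
  obtain rfl | hik := eq_or_ne i k
  · rw [surprisalDist_self, zero_add]
  obtain rfl | hkj := eq_or_ne k j
  · rw [surprisalDist_self, add_zero]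
  rw [surprisalDist_of_ne hik, surprisalDist_of_ne hkj]
  obtain rfl | hij := eq_or_ne i j
  · have log_diag_nonpos : log (γ i i) ≤ 0 := by linarith [log_add_log_le i i i]
    rw [surprisalDist_self]
    linarith [log_add_log_le i i k]
  · rw [surprisalDist_of_ne hij]
    linarith [log_add_log_le i j k, log_add_log_le j i k]

end Surprisal

theorem stmt14_general {ι : Type*} [Fintype ι] [DecidableEq ι] (W : Matrix ι ι ℝ)
    (hW : ∀ i j, 0 ≤ W i j) (hsum : Summable (fun t : ℕ => W ^ t))
    (Z : Matrix ι ι ℝ) (hZ : Z = ∑' t : ℕ, W ^ t)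
    (a b : ι → ℝ) (ha : ∀ i, 0 ≤ a i) (hb : ∀ i, 0 ≤ b i)
    (γ : Matrix ι ι ℝ) (hγdef : ∀ i j, γ i j = a i * b j * Z i j / Z j j)
    (hγpos : ∀ i j, 0 < γ i j) (hγ1 : ∑ i, ∑ j, γ i j ≤ 1)
    (Δ : Matrix ι ι ℝ)
    (hΔ : ∀ i j, Δ i j =
      if i = j then 0 else -(Real.log (γ i j) + Real.log (γ j i)) / 2) :
    (∀ i j, 0 ≤ Δ i j) ∧ (∀ i j, Δ i j = 0 ↔ i = j) ∧
      (∀ i j, Δ i j = Δ j i) ∧ (∀ i j k, Δ i j ≤ Δ i k + Δ k j) := by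
  obtain rfl : Δ = surprisalDist γ := ext hΔ
  obtain rfl : γ = hittingCoupling a b Z := ext fun i j ↦ (hγdef i j).trans (mul_div_assoc _ _ _)
  have hlim := hsum.tendsto_atTop_zero
  have hrec : Z = 1 + W * Z := by rw [hZ, ← tsum_pow_eq_one_add_mul_tsum_pow hsum]
  have hdiag (j : ι) : 0 < Z j j :=
    one_pos.trans_le (one_le_diag_of_eq_one_add_mul hW hlim hrec j)
  have hnonneg (i j : ι) := (hγpos i j).le
  have hle (i j : ι) : hittingCoupling a b Z i j ≤ 1 := (apply_le_sum_sum hnonneg i j).trans hγ1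
  have hlt (i j : ι) (hij : i ≠ j) : hittingCoupling a b Z i j < 1 :=
    (apply_lt_sum_sum hnonneg (by simpa using hij.symm) (hγpos j j)).trans_le hγ1
  have hmul (i j k : ι) :
      hittingCoupling a b Z i k * hittingCoupling a b Z k j ≤ hittingCoupling a b Z i j :=
    (hittingCoupling_mul_le ha hb (hdiag j) (hdiag k)
      (mul_le_mul_diag_of_eq_one_add_mul hW hlim hrec i j k)).trans
      (mul_le_of_le_one_right (hnonneg i j) (hle k k))
  exact ⟨surprisalDist_nonneg hγpos hle, fun _ _ ↦ surprisalDist_eq_zero_iff hγpos hlt,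
    surprisalDist_comm, surprisalDist_triangle hγpos hmul⟩

/-- The margin-constrained bag-of-hitting-paths surprisal distance is a distance metric. -/
theorem stmt14 (n : ℕ) (hn : 2 ≤ n) (W : Matrix (Fin n) (Fin n) ℝ)
    (hW : ∀ i j, 0 ≤ W i j)
    (hsum : Summable (fun t : ℕ => W ^ t))
    (Z : Matrix (Fin n) (Fin n) ℝ) (hZ : Z = ∑' t : ℕ, W ^ t)
    (hZinv : Z = (1 - W)⁻¹)
    (hdiag : ∀ j, 1 ≤ Z j j)
    (a b : Fin n → ℝ) (ha : ∀ i, 0 < a i) (hb : ∀ i, 0 < b i)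
    (γ : Matrix (Fin n) (Fin n) ℝ) (hγdef : ∀ i j, γ i j = a i * b j * Z i j / Z j j)
    (hγpos : ∀ i j, 0 < γ i j) (hγ1 : ∑ i, ∑ j, γ i j = 1)
    (Δ : Matrix (Fin n) (Fin n) ℝ)
    (hΔ : ∀ i j, Δ i j =
      if i = j then 0 else -(Real.log (γ i j) + Real.log (γ j i)) / 2) :
    (∀ i j, 0 ≤ Δ i j) ∧ (∀ i j, Δ i j = 0 ↔ i = j) ∧
      (∀ i j, Δ i j = Δ j i) ∧ (∀ i j k, Δ i j ≤ Δ i k + Δ k j) :=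
  stmt14_general W hW hsum Z hZ a b (fun i ↦ (ha i).le) (fun i ↦ (hb i).le)
    γ hγdef hγpos hγ1.le Δ hΔ
end
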